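/- Let G be a finite group and consider the multivariate polynomial ring ℂ[x_P : P ∈ G] in commuting variables indexed by the elements of G. Let Θ be the determinant of the G×G matrix whose (P,Q) entry is x_{P Q⁻¹} (the group determinant of G). Then in any factorization of Θ into irreducible polynomials: (i) the number of pairwise non-associated irreducible factors of Θ equals the number of conjugacy classes of G, and (ii) each irreducible factor of Θ occurs in Θ with multiplicity equal to its total degree. -/

import Mathlib

open Module

theorem Matrix.det_blockDiagonal' {R ι : Type*} [CommRing R] [Fintype ι] [DecidableEq ι]
    {n : ι → Type*} [∀ i, Fintype (n i)] [∀ i, DecidableEq (n i)]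
    (A : ∀ i, Matrix (n i) (n i) R) : (blockDiagonal' A).det = ∏ i, (A i).det := by
  let _ : LinearOrder ι := IsWellOrder.linearOrder WellOrderingRel
  rw [(blockTriangular_blockDiagonal' A).det_fintype]
  refine Finset.prod_congr rfl fun i _ => ?_
  let E : n i ≃ {x : Σ i, n i // x.1 = i} := Equiv.ofBijective (fun k => ⟨⟨i, k⟩, rfl⟩)
    ⟨fun k l h => by simpa using h, by rintro ⟨⟨_, k⟩, rfl⟩; exact ⟨k, rfl⟩⟩
  rw [← Matrix.det_submatrix_equiv_self E]
  congr 1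
  ext k l
  exact blockDiagonal'_apply_eq A i k l

open scoped Kronecker in
theorem Algebra.norm_pi_matrix {R ι : Type*} [CommRing R] [Fintype ι] [DecidableEq ι]
    {n : ι → Type*} [∀ i, Fintype (n i)] [∀ i, DecidableEq (n i)]
    (A : ∀ i, Matrix (n i) (n i) R) :
    Algebra.norm R A = ∏ i, (A i).det ^ Fintype.card (n i) := by
  rw [Algebra.norm_eq_matrix_det (Pi.basis fun i => Matrix.stdBasis R (n i) (n i))]
  have : Algebra.leftMulMatrix (Pi.basis fun i => Matrix.stdBasis R (n i) (n i)) A =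
      Matrix.blockDiagonal' fun i => A i ⊗ₖ (1 : Matrix (n i) (n i) R) := by
    ext ⟨i, k, l⟩ ⟨j, k', l'⟩
    rw [Algebra.leftMulMatrix_eq_repr_mul, Pi.basis_apply, Pi.basis_repr, Pi.mul_apply,
      Matrix.stdBasis_eq_single]
    by_cases h : i = j
    · subst h
      by_cases hl : l' = l
      · subst hl
        simp [Matrix.blockDiagonal'_apply, Matrix.kroneckerMap_apply, Matrix.stdBasis]
      · simp [Matrix.blockDiagonal'_apply, Matrix.kroneckerMap_apply, Matrix.stdBasis,
          Matrix.one_apply_ne (Ne.symm hl), Ne.symm hl]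
    · rw [Pi.single_eq_of_ne h]
      simp [Matrix.blockDiagonal'_apply_ne, h]
  rw [this, Matrix.det_blockDiagonal']
  simp [Matrix.det_kronecker]

namespace MvPolynomial

theorem det_mem_supported {σ R n : Type*} [CommRing R] [Fintype n] [DecidableEq n] {s : Set σ}
    {A : Matrix n n (MvPolynomial σ R)} (hA : ∀ i j, A i j ∈ supported R s) :
    A.det ∈ supported R s := by
  rw [Matrix.det_apply']
  exact sum_mem fun τ _ => mul_mem (intCast_mem _ _) (prod_mem fun i _ => hA _ _)

/-- The determinant of a nonempty square matrix of distinct indeterminates is irreducible. -/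
theorem irreducible_det_X {σ R : Type*} [CommRing R] [IsDomain R] (n : ℕ)
    (f : Fin (n + 1) → Fin (n + 1) → σ) (hf : Function.Injective (Function.uncurry f)) :
    Irreducible (Matrix.of fun i j => (X (f i j) : MvPolynomial σ R)).det := by
  induction n with
  | zero => simpa using (X_prime (i := f 0 0)).irreducible
  | succ n ih =>
    set A : Matrix (Fin (n + 2)) (Fin (n + 2)) (MvPolynomial σ R) :=
      Matrix.of fun i j => X (f i j) with hA
    have hf' : ∀ i j k l, f i j = f k l → i = k ∧ j = l := fun i j k l h => by
      simpa using @hf (i, j) (k, l) h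
    have hmem : ∀ i j, (i, j) ≠ 0 → A i j ∈ supported R {f 0 0}ᶜ := fun i j hij => by
      rw [hA, Matrix.of_apply, X_mem_supported]
      intro h
      obtain ⟨rfl, rfl⟩ := hf' _ _ _ _ h
      exact hij rfl
    have hminor : ∀ j : Fin (n + 2),
        (A.submatrix Fin.succ j.succAbove).det ∈ supported R {f 0 0}ᶜ := fun j =>
      det_mem_supported fun k l => hmem _ _ (by simp [Prod.ext_iff])
    have hirr : Irreducible (A.submatrix Fin.succ Fin.succ).det :=
      ih (fun i j => f i.succ j.succ) fun a b h => by
        have := hf' _ _ _ _ h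
        simpa [Prod.ext_iff] using this
    set g := ∑ j : Fin (n + 1), (-1) ^ (j.succ : ℕ) * A 0 j.succ *
      (A.submatrix Fin.succ j.succ.succAbove).det with hg
    have hdet : A.det = (A.submatrix Fin.succ Fin.succ).det * X (f 0 0) + g := by
      rw [Matrix.det_succ_row_zero, Fin.sum_univ_succ]
      simp [hg, hA, mul_comm]
    have hvars : ∀ p ∈ supported R {f 0 0}ᶜ, f 0 0 ∉ p.vars := fun p hp h =>
      mem_supported.1 hp h rfl
    rw [hdet]
    refine irreducible_mul_X_add _ _ _ hirr.ne_zero (hvars _ (hminor 0)) (hvars _ ?_) ?_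
    · exact sum_mem fun j _ => mul_mem (mul_mem (pow_mem (neg_mem (one_mem _)) _)
        (hmem _ _ (by simp [Prod.ext_iff]))) (hminor _)
    · rw [hirr.isRelPrime_iff_not_dvd]
      intro hdvd
      have hdvd' : (A.submatrix Fin.succ Fin.succ).det ∣ A.det :=
        hdet ▸ dvd_add (dvd_mul_right _ _) hdvd
      let P : Matrix (Fin (n + 2)) (Fin (n + 2)) R := (Equiv.swap 0 1).toPEquiv.toMatrix
      let v : σ → R := Function.extend (Function.uncurry f) (Function.uncurry P) 0
      have hv : A.map (eval v) = P := by
        ext i j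
        simp only [hA, Matrix.map_apply, Matrix.of_apply, eval_X]
        exact hf.extend_apply (Function.uncurry P) 0 (i, j)
      have h0 : ((A.submatrix Fin.succ Fin.succ).map (eval v)).det = 0 := by
        rw [← Matrix.submatrix_map, hv]
        refine Matrix.det_eq_zero_of_row_eq_zero 0 fun j => ?_
        simp [P, PEquiv.toMatrix_apply, eq_comm]
      have h1 := map_dvd (eval v) hdvd'
      rw [RingHom.map_det, RingHom.map_det, RingHom.mapMatrix_apply, RingHom.mapMatrix_apply,
        h0, hv, Matrix.det_permutation, zero_dvd_iff] at h1
      simp at h1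

end MvPolynomial

namespace MonoidAlgebra

theorem mem_center_iff_coeff_conj {k G : Type*} [CommSemiring k] [Group G]
    {a : MonoidAlgebra k G} :
    a ∈ Subalgebra.center k (MonoidAlgebra k G) ↔
      ∀ g h : G, a.coeff (g * h * g⁻¹) = a.coeff h := by
  rw [Subalgebra.mem_center_iff]
  constructor
  · intro ha g h
    have := congr_arg (fun x => coeff x (g * h)) (ha (single g 1))
    simpa [coeff_mul_single_apply, coeff_single_mul_apply] using this.symm
  · intro ha b
    induction b using MonoidAlgebra.induction_linear with
    | zero => simp
    | add x y hx hy => rw [add_mul, mul_add, hx, hy]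
    | single g r =>
      ext h
      have := ha g (g⁻¹ * h)
      simp only [mul_inv_cancel_left] at this
      simp [coeff_mul_single_apply, coeff_single_mul_apply, this, mul_comm]

/-- The center of a group algebra consists of the class functions. -/
noncomputable def centerEquivConjClasses (k G : Type*) [CommSemiring k] [Group G] [Finite G] :
    Subalgebra.center k (MonoidAlgebra k G) ≃ₗ[k] (ConjClasses G → k) where
  toFun a := fun c => Quotient.liftOn c a.1.coeff fun x y hxy => by
    obtain ⟨g, rfl⟩ := isConj_iff.1 hxy
    exact (mem_center_iff_coeff_conj.1 a.2 g x).symm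
  invFun f := ⟨ofCoeff (Finsupp.equivFunOnFinite.symm fun g => f (ConjClasses.mk g)),
    mem_center_iff_coeff_conj.2 fun g h => by
      simp only [Finsupp.equivFunOnFinite_symm_apply_apply]
      congr 1
      exact ConjClasses.mk_eq_mk_iff_isConj.2 (isConj_iff.2 ⟨g, rfl⟩).symm⟩
  left_inv a := by
    ext g
    rfl
  right_inv f := by
    ext c
    obtain ⟨g, rfl⟩ := ConjClasses.mk_surjective c
    rfl
  map_add' a b := by
    ext c
    obtain ⟨g, rfl⟩ := ConjClasses.mk_surjective c
    rfl
  map_smul' r a := by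
    ext c
    obtain ⟨g, rfl⟩ := ConjClasses.mk_surjective c
    rfl

end MonoidAlgebra

/-- The center of a product of nonempty matrix algebras consists of the tuples of scalars. -/
noncomputable def centerPiMatrixEquiv (k : Type*) [CommSemiring k] {ι : Type*} (n : ι → Type*)
    [∀ i, Fintype (n i)] [∀ i, DecidableEq (n i)] [∀ i, Nonempty (n i)] :
    (ι → k) ≃ₗ[k] Subalgebra.center k (∀ i, Matrix (n i) (n i) k) :=
  LinearEquiv.ofBijective
    (LinearMap.codRestrict (Subalgebra.center k (∀ i, Matrix (n i) (n i) k)).toSubmodule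
      (LinearMap.pi fun i => Algebra.linearMap k (Matrix (n i) (n i) k) ∘ₗ LinearMap.proj i)
      fun c => (Subalgebra.mem_center_iff (R := k)).2 fun b => by
        ext i : 1
        exact (Algebra.commutes (c i) (b i)).symm)
    ⟨fun c c' h => by
      ext i
      have := congr_fun (congr_arg Subtype.val h) i
      exact Matrix.scalar_inj.1 this,
    fun ⟨b, hb⟩ => by
      have hb' : ∀ i, b i ∈ Set.range (Matrix.scalar (n i)) := by
        rw [Subalgebra.center_pi] at hb
        intro i
        rw [← Matrix.center_eq_range]
        exact hb i trivial
      choose c hc using hb'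
      exact ⟨c, Subtype.ext (funext hc)⟩⟩

theorem card_eq_card_conjClasses_of_algEquiv {k G ι : Type*} [Field k] [Group G] [Finite G]
    [Fintype ι] {n : ι → Type*} [∀ i, Fintype (n i)] [∀ i, DecidableEq (n i)]
    [∀ i, Nonempty (n i)] (e : MonoidAlgebra k G ≃ₐ[k] ∀ i, Matrix (n i) (n i) k) :
    Fintype.card ι = Nat.card (ConjClasses G) := by
  classical
  have := Fintype.ofFinite (ConjClasses G)
  let E : Subalgebra.center k (MonoidAlgebra k G) ≃ₗ[k]
      Subalgebra.center k (∀ i, Matrix (n i) (n i) k) :=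
    e.toLinearEquiv.ofSubmodules (Subalgebra.center k (MonoidAlgebra k G)).toSubmodule
      (Subalgebra.center k (∀ i, Matrix (n i) (n i) k)).toSubmodule (by
        ext x
        simp only [Submodule.mem_map, Subalgebra.mem_toSubmodule, Subalgebra.mem_center_iff]
        constructor
        · rintro ⟨y, hy, rfl⟩ b
          apply e.symm.injective
          simpa using hy (e.symm b)
        · intro hx
          refine ⟨e.symm x, fun b => e.injective ?_, by simp⟩
          simpa using hx (e b))
  have h := ((MonoidAlgebra.centerEquivConjClasses k G).symm.trans
    (E.trans (centerPiMatrixEquiv k n).symm)).finrank_eq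
  simpa [Nat.card_eq_fintype_card] using h.symm

theorem exists_associated_of_dvd_prod_pow {M ι : Type*} [CommMonoidWithZero M]
    [IsCancelMulZero M] [DecompositionMonoid M] {s : Finset ι} {p : ι → M} {d : ι → ℕ}
    (hp : ∀ i ∈ s, Irreducible (p i)) {q : M} (hq : Irreducible q)
    (h : q ∣ ∏ i ∈ s, p i ^ d i) : ∃ i ∈ s, Associated q (p i) := by
  obtain ⟨i, hi, hqi⟩ := hq.prime.exists_mem_finset_dvd h
  exact ⟨i, hi, hq.associated_of_dvd (hp i hi) (hq.prime.dvd_of_dvd_pow hqi)⟩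

theorem not_pow_succ_dvd_prod_pow {M ι : Type*} [CommMonoidWithZero M]
    [IsCancelMulZero M] [DecompositionMonoid M] [Fintype ι] {p : ι → M} {d : ι → ℕ}
    (hp : ∀ i, Irreducible (p i)) (hne : ∀ i j, Associated (p i) (p j) → i = j) (i : ι) :
    ¬ p i ^ (d i + 1) ∣ ∏ j, p j ^ d j := by
  classical
  rw [← Finset.mul_prod_erase _ _ (Finset.mem_univ i), pow_succ,
    mul_dvd_mul_iff_left (pow_ne_zero _ (hp i).ne_zero)]
  intro h
  obtain ⟨j, hj, hij⟩ := exists_associated_of_dvd_prod_pow (fun j _ => hp j) (hp i) h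
  exact (Finset.mem_erase.1 hj).1 (hne i j hij).symm

namespace MvPolynomial

/-- The isomorphism of polynomial rings induced by a change of coordinates of a free module. -/
noncomputable def changeBasis {R V ι κ : Type*} [CommRing R] [AddCommGroup V] [Module R V]
    [Fintype ι] [Fintype κ] [DecidableEq ι] [DecidableEq κ] (b : Basis ι R V) (c : Basis κ R V) :
    MvPolynomial κ R ≃ₐ[R] MvPolynomial ι R :=
  AlgEquiv.ofAlgHom (bind₁ (LinearMap.id.toMvPolynomial b c))
    (bind₁ (LinearMap.id.toMvPolynomial c b))
    (by
      ext i : 1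
      simp [← LinearMap.toMvPolynomial_comp])
    (by
      ext i : 1
      simp [← LinearMap.toMvPolynomial_comp])

section changeBasis

variable {R V ι κ : Type*} [CommRing R] [AddCommGroup V] [Module R V]
  [Fintype ι] [Fintype κ] [DecidableEq ι] [DecidableEq κ] (b : Basis ι R V) (c : Basis κ R V)

theorem eval_changeBasis (v : V) (p : MvPolynomial κ R) :
    eval (b.repr v) (changeBasis b c p) = eval (c.repr v) p := by
  change eval (b.repr v) (bind₁ (LinearMap.id.toMvPolynomial b c) p) = _
  rw [← aeval_eq_eval, aeval_bind₁]
  have : (fun i => aeval (b.repr v) (LinearMap.id.toMvPolynomial b c i)) = c.repr v := by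
    ext i
    rw [aeval_eq_eval, LinearMap.toMvPolynomial_eval_eq_apply]
    simp
  rw [this, aeval_eq_eval]

theorem IsHomogeneous.changeBasis {p : MvPolynomial κ R} {n : ℕ} (hp : p.IsHomogeneous n) :
    (changeBasis b c p).IsHomogeneous n := by
  rw [← one_mul n]
  exact hp.aeval _ fun i => LinearMap.toMvPolynomial_isHomogeneous b c LinearMap.id i

end changeBasis

theorem isHomogeneous_det_X {σ R n : Type*} [CommRing R] [Fintype n] [DecidableEq n]
    (f : n → n → σ) :
    (Matrix.of fun i j => (X (f i j) : MvPolynomial σ R)).det.IsHomogeneous (Fintype.card n) := by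
  rw [Matrix.det_apply]
  refine IsHomogeneous.sum _ _ _ fun τ _ => ?_
  have h : (∏ i, (X (f (τ i) i) : MvPolynomial σ R)).IsHomogeneous (Fintype.card n) := by
    simpa using IsHomogeneous.prod Finset.univ _ (fun _ => 1) fun i _ =>
      isHomogeneous_X R (f (τ i) i)
  exact zsmul_mem (K := homogeneousSubmodule σ R (Fintype.card n)) h _

end MvPolynomial

section GroupDeterminant

variable {k G : Type*} [Field k] [Group G] {ι : Type*} [Fintype ι]
  {n : ι → Type*} [∀ i, Fintype (n i)] [∀ i, DecidableEq (n i)]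
  (e : MonoidAlgebra k G ≃ₐ[k] ∀ i, Matrix (n i) (n i) k)

/-- The basis of a group algebra formed by the matrix units of a Wedderburn decomposition. -/
noncomputable def matrixUnitBasis : Basis (Σ i, n i × n i) k (MonoidAlgebra k G) :=
  (Pi.basis fun i => Matrix.stdBasis k (n i) (n i)).map e.symm.toLinearEquiv

theorem matrixUnitBasis_repr (a : MonoidAlgebra k G) (i : ι) (r s : n i) :
    (matrixUnitBasis e).repr a ⟨i, r, s⟩ = e a i r s := by
  simp [matrixUnitBasis, Matrix.stdBasis]

open MvPolynomial

variable [Fintype G] [DecidableEq G] [DecidableEq ι]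

/-- The factor of the group determinant belonging to a simple component of the group algebra:
the determinant of the corresponding representation at the generic element. -/
noncomputable def groupDetFactor (i : ι) : MvPolynomial G k :=
  changeBasis (MonoidAlgebra.basis G k) (matrixUnitBasis e)
    (Matrix.of fun r s : n i => X (⟨i, r, s⟩ : Σ i, n i × n i)).det

theorem eval_groupDetFactor (a : MonoidAlgebra k G) (i : ι) :
    eval ((MonoidAlgebra.basis G k).repr a) (groupDetFactor e i) = (e a i).det := by
  rw [groupDetFactor, eval_changeBasis, RingHom.map_det]
  congr 1
  ext r s
  simp [matrixUnitBasis_repr]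

theorem eval_groupDet (a : MonoidAlgebra k G) :
    eval ((MonoidAlgebra.basis G k).repr a)
      (Matrix.of fun P Q : G => (X (P * Q⁻¹) : MvPolynomial G k)).det = Algebra.norm k a := by
  rw [Algebra.norm_eq_matrix_det (MonoidAlgebra.basis G k), RingHom.map_det]
  congr 1
  ext P Q
  rw [Algebra.leftMulMatrix_eq_repr_mul]
  have h := MonoidAlgebra.coeff_mul_single_apply a 1 Q P
  rw [mul_one] at h
  simp only [RingHom.mapMatrix_apply, Matrix.map_apply, Matrix.of_apply, eval_X,
    MonoidAlgebra.basis_apply]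
  exact h.symm

theorem groupDet_eq_prod [Infinite k] :
    (Matrix.of fun P Q : G => (X (P * Q⁻¹) : MvPolynomial G k)).det =
      ∏ i, groupDetFactor e i ^ Fintype.card (n i) := by
  refine funext fun v => ?_
  obtain ⟨a, rfl⟩ : ∃ a, ⇑((MonoidAlgebra.basis G k).repr a) = v :=
    ⟨(MonoidAlgebra.basis G k).repr.symm (Finsupp.equivFunOnFinite.symm v), by simp⟩
  rw [eval_groupDet, ← Algebra.norm_eq_of_algEquiv e, Algebra.norm_pi_matrix]
  simp [eval_groupDetFactor]

theorem irreducible_groupDetFactor {d : ι → ℕ} [∀ i, NeZero (d i)]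
    (e : MonoidAlgebra k G ≃ₐ[k] ∀ i, Matrix (Fin (d i)) (Fin (d i)) k) (i : ι) :
    Irreducible (groupDetFactor e i) := by
  rw [groupDetFactor, MulEquiv.irreducible_iff]
  have key : ∀ (m : ℕ) (f : Fin m → Fin m → Σ i, Fin (d i) × Fin (d i)), m ≠ 0 →
      Function.Injective (Function.uncurry f) →
      Irreducible (Matrix.of fun r s => (X (f r s) : MvPolynomial _ k)).det := by
    rintro (_ | m) f hm hf
    · exact absurd rfl hm
    · exact irreducible_det_X m f hf
  refine key (d i) (fun r s => ⟨i, r, s⟩) (NeZero.ne _) ?_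
  rintro ⟨r, s⟩ ⟨r', s'⟩ h
  simpa using h

theorem isHomogeneous_groupDetFactor (i : ι) :
    (groupDetFactor e i).IsHomogeneous (Fintype.card (n i)) :=
  (isHomogeneous_det_X _).changeBasis _ _

theorem eq_of_associated_groupDetFactor [∀ i, Nonempty (n i)] {i j : ι}
    (h : Associated (groupDetFactor e i) (groupDetFactor e j)) : i = j := by
  by_contra hij
  let a := e.symm (Pi.single j 1)
  have h1 := map_dvd (eval ((MonoidAlgebra.basis G k).repr a)) h.dvd
  rw [eval_groupDetFactor, eval_groupDetFactor] at h1
  simp [a, Pi.single_eq_of_ne hij] at h1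

end GroupDeterminant

/-- Frobenius' theorem on the group determinant `Θ = det (x_{PQ⁻¹})` of a finite
group `G`: the number of pairwise non-associated irreducible factors of `Θ` equals
the number of conjugacy classes of `G`, and each irreducible factor of `Θ` occurs in
`Θ` with multiplicity equal to its total degree. -/
theorem group_determinant_factorization
    (G : Type*) [Group G] [Fintype G] [DecidableEq G] :
    ∀ Θ : MvPolynomial G ℂ,
      Θ = Matrix.det (Matrix.of fun P Q : G => MvPolynomial.X (P * Q⁻¹)) →
      ((∃ s : Finset (MvPolynomial G ℂ),
          (∀ Φ ∈ s, Irreducible Φ ∧ Φ ∣ Θ) ∧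
          (∀ Φ ∈ s, ∀ Ψ ∈ s, Associated Φ Ψ → Φ = Ψ) ∧
          (∀ Ψ : MvPolynomial G ℂ, Irreducible Ψ → Ψ ∣ Θ → ∃ Φ ∈ s, Associated Ψ Φ) ∧
          s.card = Nat.card (ConjClasses G)) ∧
        (∀ Φ : MvPolynomial G ℂ, Irreducible Φ → Φ ∣ Θ →
          Φ ^ Φ.totalDegree ∣ Θ ∧ ¬ Φ ^ (Φ.totalDegree + 1) ∣ Θ)) := by
  rintro Θ rfl
  classical
  obtain ⟨m, d, hd, ⟨e⟩⟩ :=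
    IsSemisimpleRing.exists_algEquiv_pi_matrix_of_isAlgClosed ℂ (MonoidAlgebra ℂ G)
  have hirr := irreducible_groupDetFactor e
  have hne : ∀ i j, Associated (groupDetFactor e i) (groupDetFactor e j) → i = j :=
    fun i j => eq_of_associated_groupDetFactor e
  have hfac := groupDet_eq_prod e
  have hdvd : ∀ i, groupDetFactor e i ^ d i ∣
      Matrix.det (Matrix.of fun P Q : G => MvPolynomial.X (P * Q⁻¹)) := fun i => by
    rw [hfac]
    simpa using Finset.dvd_prod_of_mem (fun j => groupDetFactor e j ^ Fintype.card (Fin (d j)))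
      (Finset.mem_univ i)
  have hassoc : ∀ Φ : MvPolynomial G ℂ, Irreducible Φ →
      Φ ∣ Matrix.det (Matrix.of fun P Q : G => MvPolynomial.X (P * Q⁻¹)) →
      ∃ i, Associated Φ (groupDetFactor e i) := fun Φ hΦ h => by
    rw [hfac] at h
    obtain ⟨i, -, hi⟩ := exists_associated_of_dvd_prod_pow (fun i _ => hirr i) hΦ h
    exact ⟨i, hi⟩
  refine ⟨⟨Finset.univ.image (groupDetFactor e), ?_, ?_, ?_, ?_⟩, fun Φ hΦ h => ?_⟩
  · simp only [Finset.mem_image, Finset.mem_univ, true_and, forall_exists_index,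
      forall_apply_eq_imp_iff]
    exact fun i => ⟨hirr i, (dvd_pow_self _ (NeZero.ne (d i))).trans (hdvd i)⟩
  · simp only [Finset.mem_image, Finset.mem_univ, true_and, forall_exists_index,
      forall_apply_eq_imp_iff]
    exact fun i j h => congr_arg _ (hne i j h)
  · intro Ψ hΨ h
    obtain ⟨i, hi⟩ := hassoc Ψ hΨ h
    exact ⟨_, Finset.mem_image_of_mem _ (Finset.mem_univ i), hi⟩
  · rw [Finset.card_image_of_injective _ fun i j h => hne i j (.of_eq h),
      Finset.card_univ, card_eq_card_conjClasses_of_algEquiv e]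
  · obtain ⟨i, hi⟩ := hassoc Φ hΦ h
    have hdeg : Φ.totalDegree = d i := by
      obtain ⟨u, hu⟩ := hi
      have h2 := (isHomogeneous_groupDetFactor e i).totalDegree (hirr i).ne_zero
      rw [← hu, MvPolynomial.totalDegree_mul_of_isDomain hΦ.ne_zero u.ne_zero,
        (MvPolynomial.isUnit_iff_totalDegree_of_isReduced.1 u.isUnit).2] at h2
      simpa using h2
    rw [hdeg, (hi.pow_pow (n := d i)).dvd_iff_dvd_left,
      (hi.pow_pow (n := d i + 1)).dvd_iff_dvd_left]
    refine ⟨hdvd i, ?_⟩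
    rw [hfac]
    simpa using not_pow_succ_dvd_prod_pow (d := fun j => Fintype.card (Fin (d j))) hirr hne i
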